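/- arXiv:2504.15579 — 2 statements merged into one kernel-verified Lean document; each statement's English description precedes it below -/
import Mathlib

section
/- Let C be an abelian category and F an additive subfunctor of Ext^1 that is closed (the F-inflations are closed under composition). Then F satisfies the 3×3-lemma property: given a commutative 3×3 diagram in C whose three columns and whose first and third rows are F-exact short exact sequences, and such that the top-left square together with the induced map on cokernels forms a morphism of short exact sequences, the middle row is also an F-exact short exact sequence. -/
open CategoryTheory CategoryTheory.Limits CategoryTheory.Abelian

universe w v u

variable {C : Type u} [Category.{v} C] [Abelian C] [HasExt.{w} C]

/-- An additive subfunctor of `Ext¹`, given by a set of extension classes in each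
`Ext Z A 1`, which is an additive subgroup stable under pushout (composition with
`Ext.mk₀ a` on the right) and pullback (composition with `Ext.mk₀ c` on the left). -/
structure IsAddSubfunctor (F : ∀ Z A : C, Set (Ext Z A 1)) : Prop where
  zero_mem : ∀ Z A : C, (0 : Ext Z A 1) ∈ F Z A
  add_mem : ∀ (Z A : C), ∀ δ₁ ∈ F Z A, ∀ δ₂ ∈ F Z A, δ₁ + δ₂ ∈ F Z A
  neg_mem : ∀ (Z A : C), ∀ δ ∈ F Z A, -δ ∈ F Z A
  push : ∀ (Z A A' : C) (a : A ⟶ A'), ∀ δ ∈ F Z A, δ.comp (Ext.mk₀ a) (add_zero 1) ∈ F Z A'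
  pull : ∀ (Z Z' A : C) (c : Z' ⟶ Z), ∀ δ ∈ F Z A, (Ext.mk₀ c).comp δ (zero_add 1) ∈ F Z' A

/-- `f` is an `F`-inflation if it is the mono of a short exact sequence whose
extension class lies in `F`. -/
def IsFInflation (F : ∀ Z A : C, Set (Ext Z A 1)) {A B : C} (f : A ⟶ B) : Prop :=
  ∃ (Z : C) (g : B ⟶ Z) (w : f ≫ g = 0) (hS : (ShortComplex.mk f g w).ShortExact),
    hS.extClass ∈ F Z A

/-- `g` is an `F`-deflation if it is the epi of a short exact sequence whose
extension class lies in `F`. -/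
def IsFDeflation (F : ∀ Z A : C, Set (Ext Z A 1)) {B Z : C} (g : B ⟶ Z) : Prop :=
  ∃ (A : C) (f : A ⟶ B) (w : f ≫ g = 0) (hS : (ShortComplex.mk f g w).ShortExact),
    hS.extClass ∈ F Z A

/-- The class of `F`-inflations is closed under composition. -/
def InflationsClosed (F : ∀ Z A : C, Set (Ext Z A 1)) : Prop :=
  ∀ ⦃A B D : C⦄ (f : A ⟶ B) (g : B ⟶ D),
    IsFInflation F f → IsFInflation F g → IsFInflation F (f ≫ g)

/-- The class of `F`-deflations is closed under composition. -/
def DeflationsClosed (F : ∀ Z A : C, Set (Ext Z A 1)) : Prop :=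
  ∀ ⦃E B Z : C⦄ (e : E ⟶ B) (g : B ⟶ Z),
    IsFDeflation F e → IsFDeflation F g → IsFDeflation F (e ≫ g)

/-- Push an `F`-exact sequence along a morphism of short exact sequences that is the identity on
the right. -/
theorem mem_of_push (F : ∀ Z A : C, Set (Ext Z A 1)) (hF : IsAddSubfunctor F)
    {A B Z A' B' : C} {f : A ⟶ B} {g : B ⟶ Z} {w : f ≫ g = 0}
    {f' : A' ⟶ B'} {g' : B' ⟶ Z} {w' : f' ≫ g' = 0}
    (hS : (ShortComplex.mk f g w).ShortExact) (hS' : (ShortComplex.mk f' g' w').ShortExact)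
    (x : A ⟶ A') (y : B ⟶ B') (h₁ : x ≫ f' = f ≫ y) (h₂ : y ≫ g' = g)
    (m : hS.extClass ∈ F Z A) : hS'.extClass ∈ F Z A' := by
  have := ShortComplex.ShortExact.extClass_naturality hS hS'
    { τ₁ := x, τ₂ := y, τ₃ := 𝟙 Z, comm₁₂ := h₁, comm₂₃ := by simpa using h₂ }
  have h := hF.push _ _ _ x _ m
  erw [this] at h
  simpa using h

/-- Pull back an `F`-exact sequence along a morphism of short exact sequences that is the identity
on the left. -/
theorem mem_of_pull (F : ∀ Z A : C, Set (Ext Z A 1)) (hF : IsAddSubfunctor F)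
    {A B Z B' Z' : C} {f : A ⟶ B} {g : B ⟶ Z} {w : f ≫ g = 0}
    {f' : A ⟶ B'} {g' : B' ⟶ Z'} {w' : f' ≫ g' = 0}
    (hS : (ShortComplex.mk f g w).ShortExact) (hS' : (ShortComplex.mk f' g' w').ShortExact)
    (y : B' ⟶ B) (z : Z' ⟶ Z) (h₁ : f' ≫ y = f) (h₂ : y ≫ g = g' ≫ z)
    (m : hS.extClass ∈ F Z A) : hS'.extClass ∈ F Z' A := by
  have := ShortComplex.ShortExact.extClass_naturality hS' hS
    { τ₁ := 𝟙 A, τ₂ := y, τ₃ := z, comm₁₂ := by simpa using h₁.symm, comm₂₃ := h₂ }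
  have h := hF.pull _ _ _ z _ m
  erw [← this] at h
  simpa using h

/-- A closed additive subfunctor of `Ext¹` satisfies the 3×3-lemma property:
in a commutative 3×3 diagram of short exact sequences whose three columns and
whose first and third rows are `F`-exact, the middle row is also `F`-exact. -/
theorem closed_implies_three_by_three
    (F : ∀ Z A : C, Set (Ext Z A 1)) (hF : IsAddSubfunctor F)
    (hclosed : InflationsClosed F)
    {A B Z D E G H I J : C}
    (a : A ⟶ B) (b : B ⟶ Z) (d : D ⟶ E) (e : E ⟶ G) (g : H ⟶ I) (h : I ⟶ J)
    (i : A ⟶ D) (j : B ⟶ E) (c : Z ⟶ G) (k : D ⟶ H) (l : E ⟶ I) (f : G ⟶ J)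
    (w₁ : a ≫ b = 0) (w₂ : d ≫ e = 0) (w₃ : g ≫ h = 0)
    (v₁ : i ≫ k = 0) (v₂ : j ≫ l = 0) (v₃ : c ≫ f = 0)
    (sq₁ : a ≫ j = i ≫ d) (sq₂ : b ≫ c = j ≫ e)
    (sq₃ : d ≫ l = k ≫ g) (sq₄ : e ≫ f = l ≫ h)
    (h₁ : (ShortComplex.mk a b w₁).ShortExact)
    (h₂ : (ShortComplex.mk d e w₂).ShortExact)
    (h₃ : (ShortComplex.mk g h w₃).ShortExact)
    (hc₁ : (ShortComplex.mk i k v₁).ShortExact)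
    (hc₂ : (ShortComplex.mk j l v₂).ShortExact)
    (hc₃ : (ShortComplex.mk c f v₃).ShortExact)
    (m₁ : h₁.extClass ∈ F Z A) (m₃ : h₃.extClass ∈ F J H)
    (mc₁ : hc₁.extClass ∈ F H A) (mc₂ : hc₂.extClass ∈ F I B)
    (mc₃ : hc₃.extClass ∈ F J Z) :
    h₂.extClass ∈ F G D := by
  have hd : Mono d := h₂.mono_f
  have hg : Mono g := h₃.mono_f
  have hh : Epi h := h₃.epi_g
  have hk : Epi k := hc₁.epi_g
  have he : Epi e := h₂.epi_g
  -- the composite inflation `A ⟶ E`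
  obtain ⟨K, q, wq, hq, mq⟩ := hclosed a j ⟨Z, b, w₁, h₁, m₁⟩ ⟨I, l, v₂, hc₂, mc₂⟩
  have hqe : Epi q := hq.epi_g
  have hidq : i ≫ d ≫ q = 0 := by rw [← Category.assoc, ← sq₁]; exact wq
  obtain ⟨s, hs⟩ : ∃ s : H ⟶ K, k ≫ s = d ≫ q :=
    ⟨hc₁.exact.desc (d ≫ q) hidq, hc₁.exact.g_desc (d ≫ q) hidq⟩
  -- its pushout along `i`
  have wφ : biprod.lift d k ≫ biprod.desc q (-s) = 0 := by
    simp [biprod.lift_desc, hs]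
  have hφ : (ShortComplex.mk (biprod.lift d k) (biprod.desc q (-s)) wφ).ShortExact := by
    have : Mono (biprod.lift d k) := by
      have : Mono (biprod.lift d k ≫ biprod.fst) := by simpa using hd
      exact mono_of_mono _ biprod.fst
    have : Epi (biprod.desc q (-s)) := by
      have : Epi (biprod.inl ≫ biprod.desc q (-s)) := by simpa using hqe
      exact epi_of_epi biprod.inl _
    refine ShortComplex.ShortExact.mk ?_
    rw [ShortComplex.exact_iff_exact_up_to_refinements]
    intro T x hx
    dsimp at x hx
    obtain ⟨T₁, π₁, hπ₁, y, hy⟩ := surjective_up_to_refinements_of_epi k (x ≫ biprod.snd)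
    have hx' : x ≫ biprod.fst ≫ q = x ≫ biprod.snd ≫ s := by
      replace hx : x ≫ (biprod.desc q (-s) : E ⊞ H ⟶ K) = (0 : T ⟶ K) := hx
      rw [biprod.desc_eq] at hx
      simpa [← sub_eq_add_neg, sub_eq_zero] using hx
    have hz : (π₁ ≫ x ≫ biprod.fst - y ≫ d) ≫ q = 0 := by
      rw [Preadditive.sub_comp, sub_eq_zero]
      simp only [Category.assoc]
      rw [hx', ← hs, ← reassoc_of% hy]
    obtain ⟨T₂, π₂, hπ₂, z, hz'⟩ := hq.exact.exact_up_to_refinements _ hz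
    dsimp at z hz'
    refine ⟨T₂, π₂ ≫ π₁, inferInstance, π₂ ≫ y + z ≫ i, ?_⟩
    dsimp
    apply biprod.hom_ext
    · rw [sq₁, Preadditive.comp_sub, sub_eq_iff_eq_add] at hz'
      simp [hz', add_comm]
    · simp [hy, v₁]
  have mφ : hφ.extClass ∈ F K D :=
    mem_of_push F hF hq hφ i biprod.inl
      (by apply biprod.hom_ext <;> simp [sq₁, v₁]) (by simp) mq
  -- the direct sum of `g` with the identity of `E`
  have wψ : biprod.map (𝟙 E) g ≫ (biprod.snd ≫ h) = 0 := by simp [w₃]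
  have hψ : (ShortComplex.mk (biprod.map (𝟙 E) g) (biprod.snd ≫ h) wψ).ShortExact := by
    have : Mono (biprod.map (𝟙 E) g) := inferInstance
    have : Epi ((biprod.snd : E ⊞ I ⟶ I) ≫ h) := epi_comp _ _
    refine ShortComplex.ShortExact.mk ?_
    rw [ShortComplex.exact_iff_exact_up_to_refinements]
    intro T x hx
    dsimp at x hx
    obtain ⟨T₁, π₁, hπ₁, y, hy⟩ := h₃.exact.exact_up_to_refinements (x ≫ biprod.snd)
      (by simpa using hx)
    dsimp at y hy
    refine ⟨T₁, π₁, hπ₁, biprod.lift (π₁ ≫ x ≫ biprod.fst) y, ?_⟩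
    dsimp
    apply biprod.hom_ext <;> simp [hy]
  have mψ : hψ.extClass ∈ F J (E ⊞ H) :=
    mem_of_push F hF h₃ hψ biprod.inr biprod.inr (by simp) (by simp) m₃
  obtain ⟨W, r, wr, hr, mr⟩ := hclosed _ _ ⟨_, _, _, hφ, mφ⟩ ⟨_, _, _, hψ, mψ⟩
  have hdl : d ≫ biprod.lift (𝟙 E) l = biprod.lift d k ≫ biprod.map (𝟙 E) g := by
    apply biprod.hom_ext <;> simp [sq₃]
  have h0 : d ≫ (biprod.lift (𝟙 E) l ≫ r) = 0 := by
    rw [← Category.assoc, hdl]; exact wr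
  exact mem_of_pull F hF hr h₂ (biprod.lift (𝟙 E) l) (h₂.exact.desc _ h0) hdl
    (h₂.exact.g_desc _ h0).symm mr
end

section
/- Let C be an abelian category. For a class ξ of short exact sequences closed under isomorphism, ξ is a saturated proper class if and only if the associated subfunctor E_ξ of Ext^1 (where E_ξ(C,A) consists of classes of sequences in ξ) is a closed additive subfunctor, i.e., E_ξ(C,A) is a subgroup for all A,C, is stable under pushout and pullback, and E_ξ-inflations are closed under composition. -/
open CategoryTheory CategoryTheory.Limits CategoryTheory.Abelian

universe w v u

variable {C : Type u} [Category.{v} C] [Abelian C] [HasExt.{w} C]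

/-- The classes in `Ext Z A 1` realized by some short exact sequence in `ξ`. -/
def EClass (ξ : Set (ShortComplex C)) (Z A : C) : Set (Ext Z A 1) :=
  {δ | ∃ (B : C) (f : A ⟶ B) (g : B ⟶ Z) (w : f ≫ g = 0)
      (hS : (ShortComplex.mk f g w).ShortExact),
      ShortComplex.mk f g w ∈ ξ ∧ hS.extClass = δ}

/-- A proper class of short exact sequences: closed under isomorphism, consisting
of short exact sequences, containing all split short exact sequences, closed under
finite direct sums, and closed under base change and cobase change. -/
structure IsProperClass (ξ : Set (ShortComplex C)) : Prop where
  shortExact : ∀ S ∈ ξ, S.ShortExact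
  iso_closed : ∀ S ∈ ξ, ∀ S' : ShortComplex C, Nonempty (S ≅ S') → S' ∈ ξ
  split_mem : ∀ S : ShortComplex C, Nonempty S.Splitting → S ∈ ξ
  sum_mem : ∀ S ∈ ξ, ∀ T ∈ ξ,
    ShortComplex.mk (biprod.map S.f T.f) (biprod.map S.g T.g)
      (by ext <;> simp [S.zero, T.zero]) ∈ ξ
  base_change : ∀ (Z A : C), ∀ δ ∈ EClass ξ Z A, ∀ (Z' : C) (c : Z' ⟶ Z),
    (Ext.mk₀ c).comp δ (zero_add 1) ∈ EClass ξ Z' A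
  cobase_change : ∀ (Z A : C), ∀ δ ∈ EClass ξ Z A, ∀ (A' : C) (a : A ⟶ A'),
    δ.comp (Ext.mk₀ a) (add_zero 1) ∈ EClass ξ Z A'

/-- `ξ` is saturated: in the standard pullback 3×3 diagram obtained from two short
exact sequences over a common cokernel `Z`, if the relevant column
`A₂ → B₂ → Z` and the middle row `A₁ → M → B₂` belong to `ξ`, then the bottom
row `A₁ → B₁ → Z` belongs to `ξ`. -/
def IsSaturated (ξ : Set (ShortComplex C)) : Prop :=
  ∀ ⦃A₁ B₁ Z A₂ B₂ M : C⦄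
    (x₁ : A₁ ⟶ B₁) (y₁ : B₁ ⟶ Z) (x₂ : A₂ ⟶ B₂) (y₂ : B₂ ⟶ Z)
    (m₁ : A₁ ⟶ M) (e₁ : M ⟶ B₂) (m₂ : A₂ ⟶ M) (e₂ : M ⟶ B₁)
    (w₁ : x₁ ≫ y₁ = 0) (w₂ : x₂ ≫ y₂ = 0) (wr : m₁ ≫ e₁ = 0) (wc : m₂ ≫ e₂ = 0)
    (_c₁ : m₁ ≫ e₂ = x₁) (_c₂ : m₂ ≫ e₁ = x₂) (_c₃ : e₁ ≫ y₂ = e₂ ≫ y₁)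
    (_hpb : IsPullback e₂ e₁ y₁ y₂)
    (_h₁ : (ShortComplex.mk x₁ y₁ w₁).ShortExact)
    (_h₂ : (ShortComplex.mk x₂ y₂ w₂).ShortExact)
    (_hr : (ShortComplex.mk m₁ e₁ wr).ShortExact)
    (_hc : (ShortComplex.mk m₂ e₂ wc).ShortExact),
    ShortComplex.mk x₂ y₂ w₂ ∈ ξ → ShortComplex.mk m₁ e₁ wr ∈ ξ →
    ShortComplex.mk x₁ y₁ w₁ ∈ ξ

/-- `ξ` satisfies the 3×3-lemma property: in any commutative 3×3 diagram of short
exact sequences in which all three columns and the two outer rows belong to `ξ`,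
the middle row belongs to `ξ`. -/
def Has3x3Class (ξ : Set (ShortComplex C)) : Prop :=
  ∀ ⦃A B Z D E G H I J : C⦄
    (a : A ⟶ B) (b : B ⟶ Z) (d : D ⟶ E) (e : E ⟶ G) (g : H ⟶ I) (h : I ⟶ J)
    (i : A ⟶ D) (j : B ⟶ E) (c : Z ⟶ G) (k : D ⟶ H) (l : E ⟶ I) (f : G ⟶ J)
    (w₁ : a ≫ b = 0) (w₂ : d ≫ e = 0) (w₃ : g ≫ h = 0)
    (v₁ : i ≫ k = 0) (v₂ : j ≫ l = 0) (v₃ : c ≫ f = 0)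
    (_sq₁ : a ≫ j = i ≫ d) (_sq₂ : b ≫ c = j ≫ e)
    (_sq₃ : d ≫ l = k ≫ g) (_sq₄ : e ≫ f = l ≫ h)
    (_h₁ : (ShortComplex.mk a b w₁).ShortExact)
    (_h₂ : (ShortComplex.mk d e w₂).ShortExact)
    (_h₃ : (ShortComplex.mk g h w₃).ShortExact)
    (_hc₁ : (ShortComplex.mk i k v₁).ShortExact)
    (_hc₂ : (ShortComplex.mk j l v₂).ShortExact)
    (_hc₃ : (ShortComplex.mk c f v₃).ShortExact),
    ShortComplex.mk a b w₁ ∈ ξ → ShortComplex.mk g h w₃ ∈ ξ →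
    ShortComplex.mk i k v₁ ∈ ξ → ShortComplex.mk j l v₂ ∈ ξ →
    ShortComplex.mk c f v₃ ∈ ξ →
    ShortComplex.mk d e w₂ ∈ ξ

/-- Naturality of the extension class, unbundled. -/
lemma extClass_nat {S T : ShortComplex C} (hS : S.ShortExact) (hT : T.ShortExact)
    (a : S.X₁ ⟶ T.X₁) (b : S.X₂ ⟶ T.X₂) (c : S.X₃ ⟶ T.X₃)
    (h : a ≫ T.f = S.f ≫ b) (h' : b ≫ T.g = S.g ≫ c) :
    hS.extClass.comp (Ext.mk₀ a) (add_zero 1) = (Ext.mk₀ c).comp hT.extClass (zero_add 1) :=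
  ShortComplex.ShortExact.extClass_naturality hS hT (ShortComplex.homMk a b c h h')

/-- A morphism of short exact sequences exists as soon as the classes are compatible. -/
lemma exists_hom_of_extClass {S S' : ShortComplex C} (hS : S.ShortExact) (hS' : S'.ShortExact)
    (a : S.X₁ ⟶ S'.X₁) (c : S.X₃ ⟶ S'.X₃)
    (h : hS.extClass.comp (Ext.mk₀ a) (add_zero 1) =
      (Ext.mk₀ c).comp hS'.extClass (zero_add 1)) :
    ∃ φ : S ⟶ S', φ.τ₁ = a ∧ φ.τ₃ = c := by
  have := hS.mono_f
  have := hS.epi_g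
  have := hS'.mono_f
  have := hS'.epi_g
  have h1 : (Ext.mk₀ (S.g ≫ c)).comp hS'.extClass (zero_add 1) = 0 := by
    rw [← Ext.mk₀_comp_mk₀_assoc, ← h]
    simp
  obtain ⟨x, hx⟩ := Ext.covariant_sequence_exact₃ _ hS' (Ext.mk₀ (S.g ≫ c)) (zero_add 1) h1
  obtain ⟨t, rfl⟩ := (Ext.mk₀_bijective _ _).2 x
  rw [Ext.mk₀_comp_mk₀] at hx
  have ht : t ≫ S'.g = S.g ≫ c := (Ext.mk₀_bijective _ _).1 hx
  have hz : (S.f ≫ t) ≫ S'.g = 0 := by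
    rw [Category.assoc, ht, S.zero_assoc, zero_comp]
  let a' := hS'.exact.lift (S.f ≫ t) hz
  have ha' : a' ≫ S'.f = S.f ≫ t := hS'.exact.lift_f _ _
  have hn := extClass_nat hS hS'
    a' t c ha' ht
  have hd : hS.extClass.comp (Ext.mk₀ (a' - a)) (add_zero 1) = 0 := by
    rw [sub_eq_add_neg, Ext.mk₀_add, Ext.comp_add, Ext.mk₀_neg, Ext.comp_neg, hn, h]
    simp
  obtain ⟨y, hy⟩ := Ext.contravariant_sequence_exact₁ hS _ (Ext.mk₀ (a' - a)) (add_zero 1) hd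
  obtain ⟨s, rfl⟩ := (Ext.mk₀_bijective _ _).2 y
  rw [Ext.mk₀_comp_mk₀] at hy
  have hs : S.f ≫ s = a' - a := (Ext.mk₀_bijective _ _).1 hy
  refine ⟨ShortComplex.homMk a (t - s ≫ S'.f) c ?_ ?_, rfl, rfl⟩
  · rw [Preadditive.comp_sub, ← ha', ← Category.assoc, hs, Preadditive.sub_comp]
    abel
  · simp [ht]

/-- A short exact sequence is in `ξ` as soon as its class is. -/
lemma mem_of_extClass_mem {ξ : Set (ShortComplex C)}
    (hiso : ∀ S ∈ ξ, ∀ S' : ShortComplex C, Nonempty (S ≅ S') → S' ∈ ξ)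
    {S : ShortComplex C} (hS : S.ShortExact) (h : hS.extClass ∈ EClass ξ S.X₃ S.X₁) :
    S ∈ ξ := by
  obtain ⟨B, f, g, w, hT, hmem, heq⟩ := h
  obtain ⟨φ, h1, h3⟩ := exists_hom_of_extClass hT hS (𝟙 _) (𝟙 _) (by
    dsimp
    rw [heq]
    simp)
  have i1 : IsIso φ.τ₁ := by rw [h1]; dsimp; infer_instance
  have i3 : IsIso φ.τ₃ := by rw [h3]; dsimp; infer_instance
  have i2 : IsIso φ.τ₂ := ShortComplex.isIso₂_of_shortExact_of_isIso₁₃' φ hT hS i1 i3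
  have : IsIso φ := ShortComplex.isIso_of_isIso φ
  exact hiso _ hmem _ ⟨asIso φ⟩

lemma extClass_mem_of_mem {ξ : Set (ShortComplex C)}
    {S : ShortComplex C} (hS : S.ShortExact) (h : S ∈ ξ) :
    hS.extClass ∈ EClass ξ S.X₃ S.X₁ :=
  ⟨S.X₂, S.f, S.g, S.zero, hS, h, rfl⟩

lemma extClass_eq_zero_of_splitting {S : ShortComplex C} (hS : S.ShortExact) (s : S.Splitting) :
    hS.extClass = 0 := by
  have h : (Ext.mk₀ s.s).comp ((Ext.mk₀ S.g).comp hS.extClass (zero_add 1)) (zero_add 1) = 0 := by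
    simp
  rwa [Ext.mk₀_comp_mk₀_assoc, s.s_g, Ext.mk₀_id_comp] at h

/-- The direct sum of two short complexes. -/
noncomputable abbrev sumComplex (S T : ShortComplex C) : ShortComplex C :=
  ShortComplex.mk (biprod.map S.f T.f) (biprod.map S.g T.g)
      (by ext <;> simp [S.zero, T.zero])

lemma sum_shortExact {S T : ShortComplex C} (hS : S.ShortExact) (hT : T.ShortExact) :
    (sumComplex S T).ShortExact := by
  have := hS.mono_f
  have := hS.epi_g
  have := hT.mono_f
  have := hT.epi_g
  have m : Mono (biprod.map S.f T.f) := inferInstance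
  have e : Epi (biprod.map S.g T.g) := inferInstance
  refine { exact := ?_, mono_f := m, epi_g := e }
  refine ShortComplex.exact_of_f_is_kernel _ (KernelFork.IsLimit.ofι' _ _ fun {A} k hk => ?_)
  dsimp at k hk
  have h1 : (k ≫ biprod.fst) ≫ S.g = 0 := by
    have := hk =≫ biprod.fst
    simpa using this
  have h2 : (k ≫ biprod.snd) ≫ T.g = 0 := by
    have := hk =≫ biprod.snd
    simpa using this
  refine ⟨biprod.lift (hS.exact.lift _ h1) (hT.exact.lift _ h2), ?_⟩
  dsimp
  ext
  · simp
  · simp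

lemma sum_extClass {S T : ShortComplex C} (hS : S.ShortExact) (hT : T.ShortExact)
    (h : (sumComplex S T).ShortExact) :
    h.extClass = ((Ext.mk₀ biprod.fst).comp hS.extClass (zero_add 1)).comp
        (Ext.mk₀ biprod.inl) (add_zero 1) +
      ((Ext.mk₀ biprod.snd).comp hT.extClass (zero_add 1)).comp
        (Ext.mk₀ biprod.inr) (add_zero 1) := by
  have h1 := extClass_nat h hS
    biprod.fst biprod.fst biprod.fst (by simp) (by simp)
  have h2 := extClass_nat h hT
    biprod.snd biprod.snd biprod.snd (by simp) (by simp)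
  rw [← h1, ← h2]
  simp only [Ext.comp_assoc_of_second_deg_zero, Ext.mk₀_comp_mk₀, ← Ext.comp_add, ← Ext.mk₀_add,
      biprod.total, Ext.comp_mk₀_id]

/-- Pullback of a short exact sequence. -/
lemma pullback_shortExact {A B Z B' M : C} {x : A ⟶ B} {y : B ⟶ Z} {w : x ≫ y = 0}
    (hS : (ShortComplex.mk x y w).ShortExact) {y' : B' ⟶ Z} {p : M ⟶ B} {q : M ⟶ B'}
    (hpb : IsPullback p q y y') {m : A ⟶ M} (hm : m ≫ p = x) (hm' : m ≫ q = 0) :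
    (ShortComplex.mk m q hm').ShortExact := by
  have hx : Mono x := hS.mono_f
  have hy : Epi y := hS.epi_g
  have m1 : Mono m := by
    have : Mono (m ≫ p) := by rw [hm]; exact hx
    exact mono_of_mono m p
  have e1 : Epi q := by
    have h : hpb.isoPullback.hom ≫ pullback.snd y y' = q := hpb.isoPullback_hom_snd
    rw [← h]
    infer_instance
  refine { exact := ?_, mono_f := m1, epi_g := e1 }
  refine ShortComplex.exact_of_f_is_kernel _ (KernelFork.IsLimit.ofι' _ _ fun {T} k hk => ?_)
  dsimp at k hk
  have h1 : (k ≫ p) ≫ y = 0 := by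
    rw [Category.assoc, hpb.w, ← Category.assoc, hk, zero_comp]
  refine ⟨hS.exact.lift _ h1, ?_⟩
  have h2 : hS.exact.lift _ h1 ≫ x = k ≫ p := hS.exact.lift_f _ _
  apply hpb.hom_ext
  · dsimp
    rw [Category.assoc, hm, h2]
  · dsimp
    rw [Category.assoc, hm', hk, comp_zero]

/-- Saturation in terms of extension classes. -/
lemma saturated_ext {ξ : Set (ShortComplex C)}
    (hiso : ∀ S ∈ ξ, ∀ S' : ShortComplex C, Nonempty (S ≅ S') → S' ∈ ξ)
    (hsat : IsSaturated ξ)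
    {A₁ B₁ Z A₂ B₂ : C}
    {x₁ : A₁ ⟶ B₁} {y₁ : B₁ ⟶ Z} {x₂ : A₂ ⟶ B₂} {y₂ : B₂ ⟶ Z}
    {w₁ : x₁ ≫ y₁ = 0} {w₂ : x₂ ≫ y₂ = 0}
    (h₁ : (ShortComplex.mk x₁ y₁ w₁).ShortExact)
    (h₂ : (ShortComplex.mk x₂ y₂ w₂).ShortExact)
    (hm : ShortComplex.mk x₂ y₂ w₂ ∈ ξ)
    (hE : (Ext.mk₀ y₂).comp h₁.extClass (zero_add 1) ∈ EClass ξ B₂ A₁) :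
    ShortComplex.mk x₁ y₁ w₁ ∈ ξ := by
  have hpb := IsPullback.of_hasPullback y₁ y₂
  let m₁ : A₁ ⟶ pullback y₁ y₂ := pullback.lift x₁ 0 (by simp [w₁])
  let m₂ : A₂ ⟶ pullback y₁ y₂ := pullback.lift 0 x₂ (by simp [w₂])
  have a1 : m₁ ≫ pullback.fst _ _ = x₁ := pullback.lift_fst _ _ _
  have a2 : m₁ ≫ pullback.snd _ _ = 0 := pullback.lift_snd _ _ _
  have b1 : m₂ ≫ pullback.fst _ _ = 0 := pullback.lift_fst _ _ _
  have b2 : m₂ ≫ pullback.snd _ _ = x₂ := pullback.lift_snd _ _ _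
  have hr := pullback_shortExact h₁ hpb a1 a2
  have hc := pullback_shortExact h₂ hpb.flip b2 b1
  refine hsat x₁ y₁ x₂ y₂ m₁ (pullback.snd _ _) m₂ (pullback.fst _ _) w₁ w₂ a2 b1 a1 b2
    pullback.condition.symm hpb h₁ h₂ hr hc hm ?_
  refine mem_of_extClass_mem hiso hr ?_
  have hn := extClass_nat hr h₁
    (𝟙 _) (pullback.fst _ _) y₂ (by simp [a1]) (by simp [pullback.condition])
  dsimp at hn
  rw [Ext.comp_mk₀_id] at hn
  rw [hn]
  exact hE

lemma add_closed {ξ : Set (ShortComplex C)} (hp : IsProperClass ξ) {Z A : C} {δ₁ δ₂ : Ext Z A 1}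
    (h₁ : δ₁ ∈ EClass ξ Z A) (h₂ : δ₂ ∈ EClass ξ Z A) : δ₁ + δ₂ ∈ EClass ξ Z A := by
  obtain ⟨B, f, g, w, hS, hm, rfl⟩ := h₁
  obtain ⟨B', f', g', w', hT, hm', rfl⟩ := h₂
  have h := sum_shortExact hS hT
  have hmem := extClass_mem_of_mem h (hp.sum_mem _ hm _ hm')
  have := hp.cobase_change _ _ _ (hp.base_change _ _ _ hmem _ (biprod.lift (𝟙 Z) (𝟙 Z))) _
    (biprod.desc (𝟙 A) (𝟙 A))
  rw [sum_extClass hS hT h] at this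
  simpa [Ext.comp_assoc_of_third_deg_zero, Ext.mk₀_comp_mk₀_assoc, -Ext.mk₀_comp_mk₀,
    Ext.mk₀_comp_mk₀] using this

lemma inflations_of_saturated {ξ : Set (ShortComplex C)} (hp : IsProperClass ξ)
    (hsat : IsSaturated ξ) : InflationsClosed (EClass ξ) := by
  rintro A B D f g ⟨Z, π, w, hf, hfm⟩ ⟨W, q, w', hg, hgm⟩
  have : Mono f := hf.mono_f
  have : Mono g := hg.mono_f
  have : Epi π := hf.epi_g
  have : Epi q := hg.epi_g
  let V := cokernel (f ≫ g)
  let p : D ⟶ V := cokernel.π (f ≫ g)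
  have wp : (f ≫ g) ≫ p = 0 := cokernel.condition _
  have hS : (ShortComplex.mk (f ≫ g) p wp).ShortExact :=
    { exact := ShortComplex.exact_cokernel (f ≫ g)
      mono_f := by dsimp; infer_instance
      epi_g := by dsimp [p]; infer_instance }
  -- the map `i : Z ⟶ V`
  have hi0 : f ≫ g ≫ p = 0 := by rw [← Category.assoc, wp]
  let i : Z ⟶ V := hf.exact.desc (g ≫ p) hi0
  have hi : π ≫ i = g ≫ p := hf.exact.g_desc _ _
  -- the map `r : V ⟶ W`
  have hr0 : (f ≫ g) ≫ q = 0 := by rw [Category.assoc, w', comp_zero]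
  let r : V ⟶ W := cokernel.desc (f ≫ g) q hr0
  have hr : p ≫ r = q := cokernel.π_desc _ _ _
  have hir : i ≫ r = 0 := by
    rw [← cancel_epi π, ← Category.assoc, hi, Category.assoc, hr, w', comp_zero]
  have hEx : (ShortComplex.mk i r hir).Exact := by
    refine ShortComplex.exact_of_g_is_cokernel _
      (CokernelCofork.IsColimit.ofπ' _ _ fun {T} k hk => ?_)
    dsimp at k hk
    have h1 : g ≫ p ≫ k = 0 := by
      rw [← Category.assoc, ← hi, Category.assoc, hk, comp_zero]
    refine ⟨hg.exact.desc (p ≫ k) h1, ?_⟩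
    have h2 : q ≫ hg.exact.desc (p ≫ k) h1 = p ≫ k := hg.exact.g_desc _ _
    have : Epi p := hS.epi_g
    dsimp
    rw [← cancel_epi p, ← Category.assoc, hr, h2]
  have hmi : Mono i := by
    refine Preadditive.mono_of_cancel_zero _ fun {X} z hz => ?_
    obtain ⟨X', ρ, hρ, b, hb⟩ := surjective_up_to_refinements_of_epi π z
    have h1 : (b ≫ g) ≫ p = 0 := by
      rw [Category.assoc, ← hi, ← Category.assoc, ← hb, Category.assoc, hz, comp_zero]
    have : Mono (ShortComplex.mk (f ≫ g) p wp).f := hS.mono_f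
    have h2 : hS.exact.lift _ h1 ≫ f ≫ g = b ≫ g := hS.exact.lift_f _ _
    have h3 : hS.exact.lift _ h1 ≫ f = b := by
      rw [← cancel_mono g, Category.assoc, h2]
    rw [← cancel_epi ρ, hb, ← h3, Category.assoc, w, comp_zero, comp_zero]
  refine ⟨V, p, wp, hS, ?_⟩
  obtain ⟨B₂, x₂, e, w₂, h₂, hm₂, heq⟩ := hp.base_change _ _ _ hgm _ r
  refine extClass_mem_of_mem hS (saturated_ext hp.iso_closed hsat hS h₂ hm₂ ?_)
  -- lift `e ≫ r` through `q`
  have hl : (Ext.mk₀ (e ≫ r)).comp hg.extClass (zero_add 1) = 0 := by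
    rw [← Ext.mk₀_comp_mk₀_assoc, ← heq]
    exact h₂.comp_extClass
  obtain ⟨x, hx⟩ := Ext.covariant_sequence_exact₃ _ hg (Ext.mk₀ (e ≫ r)) (zero_add 1) hl
  obtain ⟨t, rfl⟩ := (Ext.mk₀_bijective _ _).2 x
  rw [Ext.mk₀_comp_mk₀] at hx
  have ht : t ≫ q = e ≫ r := (Ext.mk₀_bijective _ _).1 hx
  have hk : (e - t ≫ p) ≫ r = 0 := by
    rw [Preadditive.sub_comp, Category.assoc, hr, ht, sub_self]
  have : Mono (ShortComplex.mk i r hir).f := hmi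
  let s : B₂ ⟶ Z := hEx.lift _ hk
  have hs : s ≫ i = e - t ≫ p := hEx.lift_f _ _
  have he : e = t ≫ p + s ≫ i := by rw [hs]; abel
  have hn := extClass_nat hf hS
    (𝟙 _) g i (by simp) hi.symm
  dsimp at hn
  rw [Ext.comp_mk₀_id] at hn
  have h0 : (Ext.mk₀ p).comp hS.extClass (zero_add 1) = 0 := hS.comp_extClass
  rw [he, Ext.mk₀_add, Ext.add_comp, ← Ext.mk₀_comp_mk₀_assoc, ← Ext.mk₀_comp_mk₀_assoc,
    h0, ← hn, Ext.comp_zero, zero_add]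
  exact hp.base_change _ _ _ hfm _ s

/-- If `ε · x ∈ E` for an inflation `x`, then `ε ∈ E`. -/
lemma mem_of_push_mem {F : ∀ Z A : C, Set (Ext Z A 1)} (hF : IsAddSubfunctor F)
    (hcl : InflationsClosed F) {S : ShortComplex C} (hS : S.ShortExact) {T : ShortComplex C} (x : S.X₁ ⟶ T.X₁)
    (hx : IsFInflation F x) (hT : T.ShortExact)
    (hTm : hT.extClass ∈ F T.X₃ T.X₁) (φ : S ⟶ T)
    (h1 : φ.τ₁ = x) : hS.extClass ∈ F S.X₃ S.X₁ := by
  subst h1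
  obtain ⟨Q, k, wk, hQ, hQm⟩ := hcl φ.τ₁ T.f hx ⟨_, T.g, T.zero, hT, hTm⟩
  have := hS.epi_g
  have h0 : S.f ≫ φ.τ₂ ≫ k = 0 := by
    rw [← Category.assoc, ← φ.comm₁₂, wk]
  let c : S.X₃ ⟶ Q := hS.exact.desc (φ.τ₂ ≫ k) h0
  have hc : S.g ≫ c = φ.τ₂ ≫ k := hS.exact.g_desc _ _
  have hn := extClass_nat hS hQ
    (𝟙 _) φ.τ₂ c (by simp [φ.comm₁₂]) hc.symm
  dsimp at hn
  rw [Ext.comp_mk₀_id] at hn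
  rw [hn]
  exact hF.pull _ _ _ c _ hQm

/-- A class `ξ` of short exact sequences closed under isomorphism is a saturated
proper class if and only if the associated subfunctor `E_ξ` of `Ext¹` is a closed
additive subfunctor. -/
theorem saturated_proper_iff_closed_subfunctor
    (ξ : Set (ShortComplex C))
    (hSE : ∀ S ∈ ξ, S.ShortExact)
    (hiso : ∀ S ∈ ξ, ∀ S' : ShortComplex C, Nonempty (S ≅ S') → S' ∈ ξ) :
    (IsProperClass ξ ∧ IsSaturated ξ) ↔
      (IsAddSubfunctor (EClass ξ) ∧ InflationsClosed (EClass ξ)) := by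
  constructor
  · rintro ⟨hp, hsat⟩
    refine ⟨⟨?_, ?_, ?_, ?_, ?_⟩, inflations_of_saturated hp hsat⟩
    · intro Z A
      have sp : (ShortComplex.mk (biprod.inl : A ⟶ A ⊞ Z) (biprod.snd : A ⊞ Z ⟶ Z)
        (by simp)).Splitting := ShortComplex.Splitting.ofHasBinaryBiproduct A Z
      have hm := extClass_mem_of_mem sp.shortExact (hp.split_mem _ ⟨sp⟩)
      rwa [extClass_eq_zero_of_splitting _ sp] at hm
    · intro Z A δ₁ h₁ δ₂ h₂
      exact add_closed hp h₁ h₂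
    · intro Z A δ h
      have := hp.cobase_change _ _ _ h _ (-𝟙 A)
      rwa [Ext.mk₀_neg, Ext.comp_neg, Ext.comp_mk₀_id] at this
    · intro Z A A' a δ h
      exact hp.cobase_change _ _ _ h _ a
    · intro Z Z' A c δ h
      exact hp.base_change _ _ _ h _ c
  · rintro ⟨hF, hcl⟩
    refine ⟨⟨hSE, hiso, ?_, ?_, ?_, ?_⟩, ?_⟩
    · rintro S ⟨sp⟩
      refine mem_of_extClass_mem hiso sp.shortExact ?_
      rw [extClass_eq_zero_of_splitting _ sp]
      exact hF.zero_mem _ _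
    · intro S hS T hT
      have h := sum_shortExact (hSE S hS) (hSE T hT)
      refine mem_of_extClass_mem hiso h ?_
      rw [sum_extClass (hSE S hS) (hSE T hT) h]
      exact hF.add_mem _ _ _
        (hF.push _ _ _ _ _ (hF.pull _ _ _ _ _ (extClass_mem_of_mem _ hS))) _
        (hF.push _ _ _ _ _ (hF.pull _ _ _ _ _ (extClass_mem_of_mem _ hT)))
    · intro Z A δ h Z' c
      exact hF.pull _ _ _ c _ h
    · intro Z A δ h A' a
      exact hF.push _ _ _ a _ h
    · intro A₁ B₁ Z A₂ B₂ M x₁ y₁ x₂ y₂ m₁ e₁ m₂ e₂ w₁ w₂ wr wc c₁ c₂ c₃ hpb h₁ h₂ hr hc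
        hm₂ hmr
      refine mem_of_extClass_mem hiso h₁ ?_
      have hn := extClass_nat hr h₁
        (𝟙 _) e₂ y₂ (by simp [c₁]) c₃.symm
      dsimp at hn
      rw [Ext.comp_mk₀_id] at hn
      have h0 : (Ext.mk₀ y₂).comp (h₁.extClass.comp (Ext.mk₀ m₁) (add_zero 1)) (zero_add 1)
          = 0 := by
        rw [← Ext.comp_assoc_of_third_deg_zero, ← hn]
        exact hr.extClass_comp
      obtain ⟨s, hs⟩ := Ext.contravariant_sequence_exact₃ h₂ _ _ h0 (add_zero 1)
      obtain ⟨s, rfl⟩ := (Ext.mk₀_bijective _ _).2 s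
      have hmem : h₁.extClass.comp (Ext.mk₀ m₁) (add_zero 1) ∈ EClass ξ Z M := by
        have := hF.push _ _ _ s _ (extClass_mem_of_mem h₂ hm₂)
        rw [hs] at this
        exact this
      obtain ⟨P, f, g, w, hT, hTm, hTe⟩ := hmem
      obtain ⟨φ, hφ₁, hφ₃⟩ := exists_hom_of_extClass h₁ hT m₁ (𝟙 _) (by
        dsimp
        rw [hTe, Ext.mk₀_id_comp])
      have hinf : IsFInflation (EClass ξ) m₁ := ⟨B₂, e₁, wr, hr, extClass_mem_of_mem hr hmr⟩
      have hTc := extClass_mem_of_mem hT hTm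
      exact mem_of_push_mem hF hcl h₁ (T := ShortComplex.mk f g w) m₁ hinf hT hTc φ hφ₁
end
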